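/- arXiv:1305.1370 — 2 statements merged into one kernel-verified Lean document; each statement's English description precedes it below -/
import Mathlib

section
/- Let A be an n×n real matrix, B an n×m real matrix, and λ_1,…,λ_n a conjugate-ordered list of complex numbers with 2s non-real entries. Let V′ be a complex n×n matrix and W′ a complex m×n matrix whose j-th columns v_j, w_j satisfy (A − λ_j I_n) v_j + B w_j = 0 for every j, such that v_{i+1} = conj(v_i) and w_{i+1} = conj(w_i) for every odd i ≤ 2s, and v_j, w_j have real entries for j > 2s. Let V be the realification of V′ and W the realification of W′, and assume V is invertible. Then the real m×n gain matrix F := W V^{-1} satisfies (A + B F) V′ = V′ Λ, where Λ = diag(λ_1,…,λ_n); in particular V′ is invertible and A + BF is non-defective with eigenvalues λ_1,…,λ_n. -/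
/-!
For conjugate-ordered matrices, realification is right multiplication by one fixed complex matrix
`S`, since `Re z = (z + conj z) / 2` and `Im z = (z - conj z) / (2 i)`. Hence `V = V' S` and
`W = W' S`. As `V` is invertible, so are `V'` and `S`; cancelling `S` in
`F V' S = F V = W = W' S` gives `F V' = W'`, and the equations `A v_j + B w_j = λ_j v_j` become
`(A + B F) V' = V' Λ`.
-/

open Matrix

/-- Entrywise coercion of a real matrix to a complex matrix. -/
def toC {k l : ℕ} (M : Matrix (Fin k) (Fin l) ℝ) : Matrix (Fin k) (Fin l) ℂ :=
  M.map (fun x => (x : ℂ))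

/-- The realification of a complex matrix whose columns are conjugate-ordered with
`2*s` leading "complex" columns: for even `j < 2*s` (0-based) the columns `j`, `j+1`
of the result are `Re`, `Im` of column `j` of `M`; for `j ≥ 2*s` the column is the
(real) column of `M`. -/
def realify {k n : ℕ} (s : ℕ) (M : Matrix (Fin k) (Fin n) ℂ) :
    Matrix (Fin k) (Fin n) ℝ := fun i j =>
  if j.val < 2 * s ∧ j.val % 2 = 1 then
    (M i ⟨j.val - 1, lt_of_le_of_lt (Nat.sub_le _ _) j.isLt⟩).im
  else (M i j).re

theorem toC_add {k l : ℕ} (M N : Matrix (Fin k) (Fin l) ℝ) : toC (M + N) = toC M + toC N :=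
  Matrix.map_add _ Complex.ofReal_add M N

theorem toC_mul {k l p : ℕ} (M : Matrix (Fin k) (Fin l) ℝ) (N : Matrix (Fin l) (Fin p) ℝ) :
    toC (M * N) = toC M * toC N :=
  Matrix.map_mul (f := Complex.ofRealHom)

theorem det_toC {n : ℕ} (M : Matrix (Fin n) (Fin n) ℝ) : (toC M).det = (M.det : ℂ) :=
  (Complex.ofRealHom.map_det M).symm

/-- The column index conjugate to `j` when the leading `2 * s` columns are grouped into consecutive
pairs: the other member of its pair if `j` has one, and `j` itself otherwise. In particular, when
`n < 2 * s` and `n` is odd, the last column counts as unpaired. -/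
def conjPartner {n : ℕ} (s : ℕ) (j : Fin n) : Fin n :=
  if j.val < 2 * s ∧ j.val % 2 = 1 then
    ⟨j.val - 1, lt_of_le_of_lt (Nat.sub_le _ _) j.isLt⟩
  else if h : j.val < 2 * s ∧ j.val + 1 < n then ⟨j.val + 1, h.2⟩
  else j

/-- The columns of `M` are conjugate-ordered: the leading `2 * s` columns form consecutive
conjugate pairs and all others are real. As `conjPartner` fixes the unpaired columns, the single
equation covers both conditions. -/
def IsConjOrdered {k n : ℕ} (s : ℕ) (M : Matrix (Fin k) (Fin n) ℂ) : Prop :=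
  ∀ r j, M r (conjPartner s j) = (starRingEnd ℂ) (M r j)

/-- The fixed complex matrix `S` such that `M * S` is the realification of `M` for every
conjugate-ordered `M` (`IsConjOrdered.toC_realify`). The columns are stated as rows of a transpose,
so that each is a combination of standard basis vectors. -/
noncomputable def realifyMatrix (s n : ℕ) : Matrix (Fin n) (Fin n) ℂ :=
  (Matrix.of fun j =>
    if j.val < 2 * s ∧ j.val % 2 = 1 then
      (2 * Complex.I)⁻¹ • (Pi.single (conjPartner s j) 1 - Pi.single j 1)
    else (2 : ℂ)⁻¹ • (Pi.single j 1 + Pi.single (conjPartner s j) 1))ᵀ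

theorem mul_realifyMatrix_apply {k n : ℕ} (s : ℕ) (M : Matrix (Fin k) (Fin n) ℂ)
    (r : Fin k) (j : Fin n) :
    (M * realifyMatrix s n) r j =
      if j.val < 2 * s ∧ j.val % 2 = 1 then (M r (conjPartner s j) - M r j) / (2 * Complex.I)
      else (M r j + M r (conjPartner s j)) / 2 := by
  change (M *ᵥ (realifyMatrix s n).col j) r = _
  split_ifs with hodd
  · rw [show (realifyMatrix s n).col j = _ from if_pos hodd, Matrix.mulVec_smul, Matrix.mulVec_sub,
      Matrix.mulVec_single_one, Matrix.mulVec_single_one, div_eq_inv_mul]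
    rfl
  · rw [show (realifyMatrix s n).col j = _ from if_neg hodd, Matrix.mulVec_smul, Matrix.mulVec_add,
      Matrix.mulVec_single_one, Matrix.mulVec_single_one, div_eq_inv_mul]
    rfl

theorem realify_apply {k n : ℕ} (s : ℕ) (M : Matrix (Fin k) (Fin n) ℂ) (r : Fin k) (j : Fin n) :
    realify s M r j =
      if j.val < 2 * s ∧ j.val % 2 = 1 then (M r (conjPartner s j)).im else (M r j).re := by
  grind [realify, conjPartner]

namespace IsConjOrdered

variable {k n s : ℕ} {V : Matrix (Fin n) (Fin n) ℂ} {M : Matrix (Fin k) (Fin n) ℂ}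

theorem of_conj_of_real (hs : 2 * s ≤ n)
    (hconj : ∀ (i : Fin n) (h : i.val + 1 < n), i.val % 2 = 0 → i.val < 2 * s →
      ∀ r, M r ⟨i.val + 1, h⟩ = (starRingEnd ℂ) (M r i))
    (hreal : ∀ j : Fin n, 2 * s ≤ j.val → ∀ r, (M r j).im = 0) :
    IsConjOrdered s M := by
  rintro r ⟨j, hj⟩
  dsimp only [conjPartner]
  split_ifs with hodd heven
  · obtain ⟨i, rfl⟩ : ∃ i, j = i + 1 := ⟨j - 1, by omega⟩
    rw [hconj ⟨i, by omega⟩ hj (by dsimp only; omega) (by dsimp only; omega) r, Complex.conj_conj]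
    rfl
  · exact hconj ⟨j, hj⟩ heven.2 (by dsimp only; omega) heven.1 r
  · exact (Complex.conj_eq_iff_im.mpr (hreal ⟨j, hj⟩ (by dsimp only; omega) r)).symm

theorem toC_realify (hM : IsConjOrdered s M) : toC (realify s M) = M * realifyMatrix s n := by
  ext r j
  rw [mul_realifyMatrix_apply, toC, Matrix.map_apply, realify_apply]
  split_ifs
  · rw [Complex.im_eq_sub_conj, hM r j, Complex.conj_conj]
  · rw [Complex.re_eq_add_conj, hM r j]

theorem isUnit_det_realify_iff (hV : IsConjOrdered s V) :
    IsUnit (realify s V).det ↔ IsUnit V.det ∧ IsUnit (realifyMatrix s n).det := by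
  rw [← IsUnit.mul_iff, ← Matrix.det_mul, ← hV.toC_realify, det_toC, isUnit_iff_ne_zero,
    isUnit_iff_ne_zero, Complex.ofReal_ne_zero]

theorem toC_realify_mul_inv_mul (hV : IsConjOrdered s V) (hM : IsConjOrdered s M)
    (hdet : IsUnit (realify s V).det) :
    toC (realify s M * (realify s V)⁻¹) * V = M := by
  have hS : IsUnit (realifyMatrix s n).det := (hV.isUnit_det_realify_iff.mp hdet).2
  refine Matrix.mul_left_injective_of_inv _ _ (Matrix.mul_nonsing_inv _ hS) ?_
  calc toC (realify s M * (realify s V)⁻¹) * V * realifyMatrix s n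
      = toC (realify s M * (realify s V)⁻¹ * realify s V) := by
        rw [Matrix.mul_assoc, ← hV.toC_realify, ← toC_mul]
    _ = toC (realify s M) := by rw [Matrix.nonsing_inv_mul_cancel_right _ _ hdet]
    _ = M * realifyMatrix s n := hM.toC_realify

end IsConjOrdered

theorem mul_add_mul_eq_mul_diagonal_iff {ι κ l R : Type*} [Fintype ι] [Fintype κ] [Fintype l]
    [DecidableEq ι] [DecidableEq l] [CommRing R] (A : Matrix ι ι R) (B : Matrix ι κ R)
    (V : Matrix ι l R) (W : Matrix κ l R) (μ : l → R) :
    A * V + B * W = V * Matrix.diagonal μ ↔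
      ∀ j, (A - μ j • (1 : Matrix ι ι R)) *ᵥ V.col j + B *ᵥ W.col j = 0 := by
  have hcol (j : l) : (A - μ j • (1 : Matrix ι ι R)) *ᵥ V.col j + B *ᵥ W.col j =
      (A * V + B * W - V * Matrix.diagonal μ).col j := by
    rw [Matrix.sub_mulVec, Matrix.smul_mulVec, Matrix.one_mulVec]
    ext i
    simp only [Matrix.col_apply, Pi.add_apply, Pi.sub_apply, Pi.smul_apply, Matrix.sub_apply,
      Matrix.add_apply, Matrix.mul_diagonal, smul_eq_mul, mul_comm (V i j)]
    exact sub_add_eq_add_sub _ _ _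
  simp only [hcol]
  rw [← sub_eq_zero]
  exact ⟨fun h j => by rw [h]; rfl, fun h => Matrix.ext_col h⟩

theorem moore_parametric_gain_general {n m s : ℕ}
    {A : Matrix (Fin n) (Fin n) ℝ} {B : Matrix (Fin n) (Fin m) ℝ}
    {V : Matrix (Fin n) (Fin n) ℂ} {W : Matrix (Fin m) (Fin n) ℂ}
    {Λ : Matrix (Fin n) (Fin n) ℂ} (hV : IsConjOrdered s V) (hW : IsConjOrdered s W)
    (hdet : IsUnit (realify s V).det) (h : toC A * V + toC B * W = V * Λ) :
    toC (A + B * (realify s W * (realify s V)⁻¹)) * V = V * Λ ∧ IsUnit V.det := by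
  refine ⟨?_, (hV.isUnit_det_realify_iff.mp hdet).1⟩
  rw [toC_add, toC_mul B, Matrix.add_mul, Matrix.mul_assoc,
    hV.toC_realify_mul_inv_mul hW hdet, h]

/-- If the columns of `V'`, `W'` solve `(A - λ_j I) v_j + B w_j = 0`
with the conjugate-pairing structure, and the realification `V` of `V'` is invertible,
then `F = W V⁻¹` places the poles: `(A + BF) V' = V' Λ`, and `V'` is invertible
(so `A + BF` is non-defective with eigenvalues `λ_1, …, λ_n`). -/
theorem moore_parametric_gain {n m : ℕ} (s : ℕ) (hs : 2 * s ≤ n)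
    (A : Matrix (Fin n) (Fin n) ℝ) (B : Matrix (Fin n) (Fin m) ℝ)
    (lam : Fin n → ℂ)
    (hnonreal : ∀ j : Fin n, j.val < 2 * s → (lam j).im ≠ 0)
    (hconj : ∀ (i : Fin n) (h : i.val + 1 < n), i.val % 2 = 0 → i.val < 2 * s →
      lam ⟨i.val + 1, h⟩ = (starRingEnd ℂ) (lam i))
    (hreal : ∀ j : Fin n, 2 * s ≤ j.val → (lam j).im = 0)
    (V' : Matrix (Fin n) (Fin n) ℂ) (W' : Matrix (Fin m) (Fin n) ℂ)
    (hcol : ∀ j : Fin n,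
      (toC A - lam j • (1 : Matrix (Fin n) (Fin n) ℂ)) *ᵥ (fun i => V' i j)
        + toC B *ᵥ (fun i => W' i j) = 0)
    (hVconj : ∀ (i : Fin n) (h : i.val + 1 < n), i.val % 2 = 0 → i.val < 2 * s →
      ∀ r, V' r ⟨i.val + 1, h⟩ = (starRingEnd ℂ) (V' r i))
    (hWconj : ∀ (i : Fin n) (h : i.val + 1 < n), i.val % 2 = 0 → i.val < 2 * s →
      ∀ r, W' r ⟨i.val + 1, h⟩ = (starRingEnd ℂ) (W' r i))
    (hVreal : ∀ j : Fin n, 2 * s ≤ j.val → ∀ r, (V' r j).im = 0)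
    (hWreal : ∀ j : Fin n, 2 * s ≤ j.val → ∀ r, (W' r j).im = 0)
    (hV : IsUnit (realify s V').det) :
    toC (A + B * (realify s W' * (realify s V')⁻¹)) * V' = V' * Matrix.diagonal lam
      ∧ IsUnit V'.det :=
  moore_parametric_gain_general (.of_conj_of_real hs hVconj hVreal)
    (.of_conj_of_real hs hWconj hWreal) hV
    ((mul_add_mul_eq_mul_diagonal_iff _ _ _ _ _).mpr hcol)
end

section
/- Let A be an n×n real matrix, B an n×m real matrix, λ_1,…,λ_n a conjugate-ordered list of complex numbers with 2s non-real entries, and Λ = diag(λ_1,…,λ_n). Suppose a real m×n matrix F and an invertible complex n×n matrix X satisfy (A + B F) X = X Λ, where the columns x_j of X satisfy x_{i+1} = conj(x_i) for every odd i ≤ 2s and x_j is real for j > 2s. Define w_j := F x_j and let W′ be the m×n matrix with columns w_j. Then (A − λ_j I_n) x_j + B w_j = 0 for every j, w_{i+1} = conj(w_i) for every odd i ≤ 2s and w_j is real for j > 2s, the realification V of X is invertible, and F = W V^{-1} where W is the realification of W′. -/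
/-!
A real matrix commutes with entrywise conjugation and with real and imaginary parts, so left
multiplication by a real matrix preserves conjugate order and commutes with realification.
In particular `W = F V`, and it remains to invert `V`. A conjugate-ordered matrix can be recovered
from its realification; hence if real row vectors `u`, `v` satisfy `u V = v V`, then `u X = v X`,
and `u = v` because `X` is invertible.
-/

open Matrix

section EigenvectorEquation

variable {R n m p : Type*} [CommRing R] [Fintype n] [DecidableEq n] [Fintype m] [Fintype p]
  [DecidableEq p]

lemma sub_smul_one_mulVec_col_add_mulVec_col_eq_zero {A : Matrix n n R} {B : Matrix n m R}
    {F : Matrix m n R} {X : Matrix n p R} {d : p → R} (h : (A + B * F) * X = X * diagonal d)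
    (j : p) : (A - d j • (1 : Matrix n n R)) *ᵥ X.col j + B *ᵥ (F * X).col j = 0 := by
  ext i
  have hij : (A * X) i j + (B * (F * X)) i j = X i j * d j := by
    rw [← Matrix.mul_assoc, ← Matrix.add_apply, ← Matrix.add_mul, h, Matrix.mul_diagonal]
  rw [Matrix.sub_mulVec, Matrix.smul_mulVec, Matrix.one_mulVec]
  change (A * X) i j - d j * X i j + (B * (F * X)) i j = 0
  linear_combination hij

end EigenvectorEquation

section RealMatrix

variable {k l p : ℕ}

lemma toC_injective : Function.Injective (toC (k := k) (l := l)) :=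
  Matrix.map_injective Complex.ofReal_injective

lemma toC_mul_apply_re (G : Matrix (Fin k) (Fin l) ℝ) (M : Matrix (Fin l) (Fin p) ℂ)
    (i : Fin k) (j : Fin p) : ((toC G * M) i j).re = ∑ t, G i t * (M t j).re := by
  simp [toC, Matrix.mul_apply]

lemma toC_mul_apply_im (G : Matrix (Fin k) (Fin l) ℝ) (M : Matrix (Fin l) (Fin p) ℂ)
    (i : Fin k) (j : Fin p) : ((toC G * M) i j).im = ∑ t, G i t * (M t j).im := by
  simp [toC, Matrix.mul_apply]

lemma realify_toC_mul (s : ℕ) (G : Matrix (Fin k) (Fin l) ℝ) (M : Matrix (Fin l) (Fin p) ℂ) :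
    realify s (toC G * M) = G * realify s M := by
  ext i j
  rw [Matrix.mul_apply]
  by_cases h : j.val < 2 * s ∧ j.val % 2 = 1
  · simp only [realify, if_pos h, toC_mul_apply_im]
  · simp only [realify, if_neg h, toC_mul_apply_re]

end RealMatrix

section Realify

variable {k n s : ℕ}

lemma realify_apply_eq_re (M : Matrix (Fin k) (Fin n) ℂ) (r : Fin k) {j : Fin n}
    (hj : 2 * s ≤ j.val ∨ j.val % 2 = 0) : realify s M r j = (M r j).re :=
  if_neg (by omega)

lemma realify_apply_succ_eq_im (M : Matrix (Fin k) (Fin n) ℂ) (r : Fin k) {i : Fin n}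
    (h : i.val + 1 < n) (hi : i.val % 2 = 0) (his : i.val < 2 * s) :
    realify s M r ⟨i.val + 1, h⟩ = (M r i).im :=
  if_pos (by dsimp only; omega)

end Realify

/-- A complex matrix is conjugate-ordered when its first `2 * s` columns come in adjacent conjugate
pairs and all later columns are real. This is the structure from which `realify` loses no
information. Columns are indexed from `0`, so a pair starts at an even index; the columns of a
pair are not required to be non-real. -/
structure IsConjOrdered_s1 {k n : ℕ} (s : ℕ) (M : Matrix (Fin k) (Fin n) ℂ) : Prop where
  apply_succ : ∀ (i : Fin n) (h : i.val + 1 < n), i.val % 2 = 0 → i.val < 2 * s →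
    ∀ r, M r ⟨i.val + 1, h⟩ = (starRingEnd ℂ) (M r i)
  im_eq_zero : ∀ j : Fin n, 2 * s ≤ j.val → ∀ r, (M r j).im = 0

namespace IsConjOrdered_s1

variable {k l n s : ℕ}

lemma toC_mul {M : Matrix (Fin l) (Fin n) ℂ} (hM : IsConjOrdered_s1 s M)
    (G : Matrix (Fin k) (Fin l) ℝ) : IsConjOrdered_s1 s (toC G * M) where
  apply_succ i h hi his r := by
    simp [toC, Matrix.mul_apply, hM.apply_succ i h hi his]
  im_eq_zero j hj r := by
    simp [toC_mul_apply_im, hM.im_eq_zero j hj]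

lemma eq_of_realify_eq {M N : Matrix (Fin k) (Fin n) ℂ} (hs : 2 * s ≤ n)
    (hM : IsConjOrdered_s1 s M) (hN : IsConjOrdered_s1 s N) (h : realify s M = realify s N) :
    M = N := by
  have hre (r : Fin k) (j : Fin n) (hj : 2 * s ≤ j.val ∨ j.val % 2 = 0) :
      (M r j).re = (N r j).re := by
    rw [← realify_apply_eq_re M r hj, h, realify_apply_eq_re N r hj]
  have heven (r : Fin k) (i : Fin n) (hi : i.val % 2 = 0) (his : i.val < 2 * s) :
      M r i = N r i := by
    have hi' : i.val + 1 < n := by omega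
    refine Complex.ext (hre r i (.inr hi)) ?_
    rw [← realify_apply_succ_eq_im M r hi' hi his, h, realify_apply_succ_eq_im N r hi' hi his]
  ext r j
  rcases le_or_gt (2 * s) j.val with hjs | hjs
  · exact Complex.ext (hre r j (.inl hjs)) (by rw [hM.im_eq_zero j hjs, hN.im_eq_zero j hjs])
  rcases Nat.mod_two_eq_zero_or_one j.val with hj | hj
  · exact heven r j hj hjs
  · obtain ⟨i, hi1, rfl⟩ : ∃ (i : Fin n) (h : i.val + 1 < n), j = ⟨i.val + 1, h⟩ :=
      ⟨⟨j.val - 1, by omega⟩, by dsimp only; omega, Fin.ext (by dsimp only; omega)⟩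
    dsimp only at hj hjs
    have hi : i.val % 2 = 0 := by omega
    have his : i.val < 2 * s := by omega
    rw [hM.apply_succ i hi1 hi his, hN.apply_succ i hi1 hi his, heven r i hi his]

lemma isUnit_det_realify {X : Matrix (Fin n) (Fin n) ℂ} (hs : 2 * s ≤ n)
    (hX : IsConjOrdered_s1 s X) (hdet : IsUnit X.det) : IsUnit (realify s X).det := by
  rw [← Matrix.isUnit_iff_isUnit_det, ← Matrix.vecMul_injective_iff_isUnit,
    ← Matrix.mul_left_injective_iff_vecMul_injective (l := Fin 1)]
  intro G H hGH
  have hreal : realify s (toC G * X) = realify s (toC H * X) := by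
    simpa only [realify_toC_mul] using hGH
  have hcomplex : toC G * X = toC H * X :=
    eq_of_realify_eq hs (hX.toC_mul G) (hX.toC_mul H) hreal
  exact toC_injective
    (Matrix.mul_left_injective_of_inv X X⁻¹ (X.mul_nonsing_inv hdet) hcomplex)

end IsConjOrdered_s1

theorem moore_parametric_comprehensive_general {n m : ℕ} (s : ℕ) (hs : 2 * s ≤ n)
    (A : Matrix (Fin n) (Fin n) ℝ) (B : Matrix (Fin n) (Fin m) ℝ) (lam : Fin n → ℂ)
    (F : Matrix (Fin m) (Fin n) ℝ) (X : Matrix (Fin n) (Fin n) ℂ) (hX : IsUnit X.det)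
    (hEPP : (toC A + toC B * toC F) * X = X * Matrix.diagonal lam) (hXs : IsConjOrdered_s1 s X) :
    (∀ j : Fin n,
      (toC A - lam j • (1 : Matrix (Fin n) (Fin n) ℂ)) *ᵥ X.col j
        + toC B *ᵥ (toC F * X).col j = 0)
    ∧ IsConjOrdered_s1 s (toC F * X)
    ∧ IsUnit (realify s X).det
    ∧ F = realify s (toC F * X) * (realify s X)⁻¹ := by
  have hV : IsUnit (realify s X).det := hXs.isUnit_det_realify hs hX
  refine ⟨sub_smul_one_mulVec_col_add_mulVec_col_eq_zero hEPP, hXs.toC_mul F, hV, ?_⟩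
  rw [realify_toC_mul, Matrix.mul_nonsing_inv_cancel_right _ _ hV]

/-- If a real gain `F` and an invertible, conjugate-structured
eigenvector matrix `X` satisfy `(A + BF) X = X Λ`, then with `w_j := F x_j`
(i.e. `W' = F X`) the columns satisfy `(A - λ_j I) x_j + B w_j = 0`, `W'` has the
same conjugate structure, the realification `V` of `X` is invertible, and
`F = W V⁻¹` where `W` is the realification of `W'`. -/
theorem moore_parametric_comprehensive {n m : ℕ} (s : ℕ) (hs : 2 * s ≤ n)
    (A : Matrix (Fin n) (Fin n) ℝ) (B : Matrix (Fin n) (Fin m) ℝ)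
    (lam : Fin n → ℂ)
    (hnonreal : ∀ j : Fin n, j.val < 2 * s → (lam j).im ≠ 0)
    (hconj : ∀ (i : Fin n) (h : i.val + 1 < n), i.val % 2 = 0 → i.val < 2 * s →
      lam ⟨i.val + 1, h⟩ = (starRingEnd ℂ) (lam i))
    (hreal : ∀ j : Fin n, 2 * s ≤ j.val → (lam j).im = 0)
    (F : Matrix (Fin m) (Fin n) ℝ)
    (X : Matrix (Fin n) (Fin n) ℂ) (hX : IsUnit X.det)
    (hEPP : (toC A + toC B * toC F) * X = X * Matrix.diagonal lam)
    (hXconj : ∀ (i : Fin n) (h : i.val + 1 < n), i.val % 2 = 0 → i.val < 2 * s →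
      ∀ r, X r ⟨i.val + 1, h⟩ = (starRingEnd ℂ) (X r i))
    (hXreal : ∀ j : Fin n, 2 * s ≤ j.val → ∀ r, (X r j).im = 0) :
    (∀ j : Fin n,
      (toC A - lam j • (1 : Matrix (Fin n) (Fin n) ℂ)) *ᵥ (fun i => X i j)
        + toC B *ᵥ (fun i => (toC F * X) i j) = 0)
    ∧ (∀ (i : Fin n) (h : i.val + 1 < n), i.val % 2 = 0 → i.val < 2 * s →
        ∀ r, (toC F * X) r ⟨i.val + 1, h⟩ = (starRingEnd ℂ) ((toC F * X) r i))
    ∧ (∀ j : Fin n, 2 * s ≤ j.val → ∀ r, ((toC F * X) r j).im = 0)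
    ∧ IsUnit (realify s X).det
    ∧ F = realify s (toC F * X) * (realify s X)⁻¹ := by
  obtain ⟨hcol, hW, hV, hF⟩ :=
    moore_parametric_comprehensive_general s hs A B lam F X hX hEPP ⟨hXconj, hXreal⟩
  exact ⟨hcol, hW.apply_succ, hW.im_eq_zero, hV, hF⟩
end
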